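/- There exists an odd unimodular lattice L in dimension 36 having minimum norm 4, kissing number 42840, and σ(L) = 12. -/

import Mathlib

open scoped RealInnerProductSpace

noncomputable section

/-- The norm `(x, x)` of a vector `x ∈ ℝⁿ` (squared Euclidean length). -/
def normOf {n : ℕ} (x : EuclideanSpace ℝ (Fin n)) : ℝ := ⟪x, x⟫

/-- The dual `L* = {x ∈ ℝⁿ : (x,y) ∈ ℤ for all y ∈ L}` of a set of vectors. -/
def dualSet {n : ℕ} (L : Set (EuclideanSpace ℝ (Fin n))) : Set (EuclideanSpace ℝ (Fin n)) :=
  {x | ∀ y ∈ L, ∃ m : ℤ, ⟪x, y⟫ = (m : ℝ)}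

/-- `L` is a unimodular lattice: `L = L*`. -/
def IsUnimodularLattice {n : ℕ} (L : Set (EuclideanSpace ℝ (Fin n))) : Prop :=
  L = dualSet L

/-- `L` is odd: some vector of `L` has odd (integral) norm. -/
def IsOddLattice {n : ℕ} (L : Set (EuclideanSpace ℝ (Fin n))) : Prop :=
  ∃ x ∈ L, ∃ m : ℤ, Odd m ∧ normOf x = (m : ℝ)

/-- The even sublattice `L₀ = {x ∈ L : (x,x) even}`. -/
def evenSublattice {n : ℕ} (L : Set (EuclideanSpace ℝ (Fin n))) :
    Set (EuclideanSpace ℝ (Fin n)) :=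
  {x | x ∈ L ∧ ∃ m : ℤ, normOf x = 2 * (m : ℝ)}

/-- The shadow `S(L) = L₀* \ L`. -/
def shadow {n : ℕ} (L : Set (EuclideanSpace ℝ (Fin n))) : Set (EuclideanSpace ℝ (Fin n)) :=
  dualSet (evenSublattice L) \ L

/-- `L` has minimum norm `r`: `r` is the least norm among nonzero vectors of `L`. -/
def HasMinNorm {n : ℕ} (L : Set (EuclideanSpace ℝ (Fin n))) (r : ℝ) : Prop :=
  IsLeast {s : ℝ | ∃ x ∈ L, x ≠ 0 ∧ normOf x = s} r

/-- The shadow `S(L)` has minimum norm `r`. -/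
def HasShadowMinNorm {n : ℕ} (L : Set (EuclideanSpace ℝ (Fin n))) (r : ℝ) : Prop :=
  IsLeast {s : ℝ | ∃ x ∈ shadow L, normOf x = s} r

/-- `σ(L) = r`, i.e. `4 · min(S(L)) = r`. -/
def HasSigma {n : ℕ} (L : Set (EuclideanSpace ℝ (Fin n))) (r : ℝ) : Prop :=
  ∃ s : ℝ, HasShadowMinNorm L s ∧ r = 4 * s

/-- The number of vectors of norm `r` in `L`; when `L` has minimum norm `r`,
this is the kissing number of `L`. -/
def numVecsOfNorm {n : ℕ} (L : Set (EuclideanSpace ℝ (Fin n))) (r : ℝ) : ℕ :=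
  Set.ncard {x ∈ L | normOf x = r}


/-- Entrywise addition of vectors over `ℤ/3`, represented as lists of residues `0, 1, 2`. -/
noncomputable def addL (a : List ℕ) : List ℕ → List ℕ :=
  List.rec (fun _ => []) (fun x _ ih b =>
    List.rec [] (fun y ys _ => Nat.mod (Nat.add x y) 3 :: ih ys) b) a

/-- The zero vector of length 18. -/
def zeroL : List ℕ := List.replicate 18 0

/-- The rows of the redundancy part `S` of the generator matrix `[I | S]` (four-negacirculant). -/
def rowsS : List (List ℕ) :=
  [[1, 1, 1, 0, 0, 0, 0, 0, 0, 1, 1, 1, 2, 0, 1, 0, 0, 0],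
   [0, 1, 1, 1, 0, 0, 0, 0, 0, 0, 1, 1, 1, 2, 0, 1, 0, 0],
   [0, 0, 1, 1, 1, 0, 0, 0, 0, 0, 0, 1, 1, 1, 2, 0, 1, 0],
   [0, 0, 0, 1, 1, 1, 0, 0, 0, 0, 0, 0, 1, 1, 1, 2, 0, 1],
   [0, 0, 0, 0, 1, 1, 1, 0, 0, 2, 0, 0, 0, 1, 1, 1, 2, 0],
   [0, 0, 0, 0, 0, 1, 1, 1, 0, 0, 2, 0, 0, 0, 1, 1, 1, 2],
   [0, 0, 0, 0, 0, 0, 1, 1, 1, 1, 0, 2, 0, 0, 0, 1, 1, 1],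
   [2, 0, 0, 0, 0, 0, 0, 1, 1, 2, 1, 0, 2, 0, 0, 0, 1, 1],
   [2, 2, 0, 0, 0, 0, 0, 0, 1, 2, 2, 1, 0, 2, 0, 0, 0, 1],
   [2, 0, 0, 0, 1, 0, 2, 1, 1, 1, 0, 0, 0, 0, 0, 0, 2, 2],
   [2, 2, 0, 0, 0, 1, 0, 2, 1, 1, 1, 0, 0, 0, 0, 0, 0, 2],
   [2, 2, 2, 0, 0, 0, 1, 0, 2, 1, 1, 1, 0, 0, 0, 0, 0, 0],
   [1, 2, 2, 2, 0, 0, 0, 1, 0, 0, 1, 1, 1, 0, 0, 0, 0, 0],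
   [0, 1, 2, 2, 2, 0, 0, 0, 1, 0, 0, 1, 1, 1, 0, 0, 0, 0],
   [2, 0, 1, 2, 2, 2, 0, 0, 0, 0, 0, 0, 1, 1, 1, 0, 0, 0],
   [0, 2, 0, 1, 2, 2, 2, 0, 0, 0, 0, 0, 0, 1, 1, 1, 0, 0],
   [0, 0, 2, 0, 1, 2, 2, 2, 0, 0, 0, 0, 0, 0, 1, 1, 1, 0],
   [0, 0, 0, 2, 0, 1, 2, 2, 2, 0, 0, 0, 0, 0, 0, 1, 1, 1]]

/-- The rows of the transpose of `S`. -/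
def rowsT : List (List ℕ) :=
  (List.range 18).map fun j => rowsS.map fun r => r.getD j 0

/-- The Hamming weight of a list of residues. -/
def wtL (l : List ℕ) : ℕ := (l.map fun v => if v = 0 then 0 else 1).sum

/-- The number of entries `2 = -1` of a list of residues. -/
def twoL (l : List ℕ) : ℕ := (l.map fun v => if v = 2 then 1 else 0).sum

/-- Linear combination of rows added to an accumulator. -/
noncomputable def lincomb : List ℕ → List (List ℕ) → List ℕ → List ℕ
  | c :: cs, r :: rs, acc => lincomb cs rs ((fun a => addL a r)^[c] acc)
  | _, _, acc => acc

/-- Check (with early exit) that a list has at least `m` nonzero entries. -/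
noncomputable def geN (l : List ℕ) : ℕ → Bool :=
  List.rec (fun m => Nat.beq m 0) (fun v _ ih m =>
    Nat.rec true (fun m' _ => Nat.rec (ih (Nat.succ m')) (fun _ _ => ih m') v) m) l

/-- Check that all nontrivial combinations of at most `k` further rows have total weight `≥ 9`. -/
noncomputable def chk (rows : List (List ℕ)) : List ℕ → ℕ → ℕ → Bool :=
  List.rec (fun acc w _ => cond (Nat.beq w 0) true (geN acc (Nat.sub 9 w)))
    (fun r _ ih acc w k => Nat.rec (cond (Nat.beq w 0) true (geN acc (Nat.sub 9 w)))
      (fun k' _ => cond (ih acc w (Nat.succ k'))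
        (cond (ih (addL acc r) (Nat.succ w) k')
          (ih (addL (addL acc r) r) (Nat.succ w) k') false) false) k) rows

/-- All combinations with coefficients `1, 2`, with the number of coefficients equal to `2`. -/
noncomputable def genF : List (List ℕ) → List ℕ → ℕ → List (ℕ × List ℕ)
  | [], acc, p => [(p, acc)]
  | r :: rs, acc, p => genF rs (addL acc r) p ++ genF rs (addL (addL acc r) r) (p + 1)

/-- One-hot encoding of a vector of residues. -/
def enc : List ℕ → ℕ
  | [] => 0
  | v :: vs => Nat.add (Nat.pow 2 v) (Nat.mul 8 (enc vs))

/-- One-hot encoding of the negative of a vector of residues. -/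
def encN : List ℕ → ℕ
  | [] => 0
  | v :: vs => Nat.add (Nat.pow 2 ((3 - v) % 3)) (Nat.mul 8 (encN vs))

/-- `List.all`, written with the recursor. -/
noncomputable def allR {α : Type} (p : α → Bool) (l : List α) : Bool :=
  List.rec true (fun b _ ih => cond (p b) ih false) l

/-- The meet-in-the-middle check that full-weight codewords have an odd number of `-1`s. -/
noncomputable def chkFull : Bool :=
  allR (fun a => allR (fun b =>
    cond (Nat.beq (Nat.land a.2.2 b.2.2) 0)
      (Nat.beq ((a.1 + b.1 + twoL (addL a.2.1 b.2.1)) % 2) 1) true)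
    ((genF (rowsS.drop 9) zeroL 0).map fun b => (b.1, b.2, encN b.2)))
  ((genF (rowsS.take 9).tail (addL zeroL (rowsS.getD 0 [])) 0).map fun a => (a.1, a.2, enc a.2))

theorem chkS_true : chk rowsS zeroL 0 3 = true := by decide +kernel
theorem chkT_true : chk rowsT zeroL 0 2 = true := by decide +kernel
theorem chkFull_true : chkFull = true := by decide +kernel

theorem addL_nil (b : List ℕ) : addL [] b = [] := rfl
theorem addL_cons (x : ℕ) (xs : List ℕ) (y : ℕ) (ys : List ℕ) :
    addL (x :: xs) (y :: ys) = (x + y) % 3 :: addL xs ys := rfl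

theorem addL_eq (a b : List ℕ) : addL a b = List.zipWith (fun x y => (x + y) % 3) a b := by
  induction a generalizing b with
  | nil => simp [addL_nil]
  | cons x xs ih =>
    cases b with
    | nil => rfl
    | cons y ys => rw [addL_cons, ih]; rfl

theorem geN_sound (l : List ℕ) (m : ℕ) (h : geN l m = true) : m ≤ wtL l := by
  induction l generalizing m with
  | nil =>
    have h' : Nat.beq m 0 = true := h
    have := Nat.eq_of_beq_eq_true h'
    omega
  | cons v vs ih =>
    cases m with
    | zero => omega
    | succ m =>
      cases v with
      | zero =>
        have h' : geN vs (m + 1) = true := h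
        have := ih _ h'
        simpa [wtL] using this
      | succ v =>
        have h' : geN vs m = true := h
        have := ih _ h'
        simp [wtL] at this ⊢
        omega

theorem wtL_cons (c : ℕ) (cs : List ℕ) : wtL (c :: cs) = (if c = 0 then 0 else 1) + wtL cs := by
  simp [wtL]

theorem twoL_cons (c : ℕ) (cs : List ℕ) : twoL (c :: cs) = (if c = 2 then 1 else 0) + twoL cs := by
  simp [twoL]

theorem lincomb_zero (cs : List ℕ) (rows : List (List ℕ)) (acc : List ℕ) (h : wtL cs = 0) :
    lincomb cs rows acc = acc := by
  induction cs generalizing rows acc with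
  | nil => simp [lincomb]
  | cons c cs ih =>
    rw [wtL_cons] at h
    have hc : c = 0 := by
      by_contra hc
      simp [hc] at h
    subst hc
    cases rows with
    | nil => simp [lincomb]
    | cons r rs =>
      simp only [lincomb, Function.iterate_zero, id]
      exact ih _ _ (by simpa using h)

theorem chk_sound (rows : List (List ℕ)) (acc : List ℕ) (w k : ℕ) (h : chk rows acc w k = true)
    (cs : List ℕ) (hl : cs.length = rows.length) (h3 : ∀ c ∈ cs, c < 3) (hk : wtL cs ≤ k) :
    w + wtL cs = 0 ∨ 9 ≤ w + wtL cs + wtL (lincomb cs rows acc) := by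
  have leaf : ∀ (acc : List ℕ) (w : ℕ),
      cond (Nat.beq w 0) true (geN acc (Nat.sub 9 w)) = true → w = 0 ∨ 9 ≤ w + wtL acc := by
    intro acc w h
    cases w with
    | zero => left; rfl
    | succ w =>
      right
      have h' : geN acc (9 - (w + 1)) = true := h
      have := geN_sound _ _ h'
      omega
  induction rows generalizing acc w k cs with
  | nil =>
    have hcs : cs = [] := by simpa using hl
    subst hcs
    have := leaf acc w h
    simpa [wtL, lincomb] using this
  | cons r rs ih =>
    cases k with
    | zero =>
      have h0 : wtL cs = 0 := by omega
      rw [lincomb_zero _ _ _ h0, h0]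
      exact leaf acc w h
    | succ k =>
      have h' : cond (chk rs acc w (k + 1)) (cond (chk rs (addL acc r) (w + 1) k)
          (chk rs (addL (addL acc r) r) (w + 1) k) false) false = true := h
      simp only [Bool.cond_false_right, Bool.and_eq_true] at h'
      obtain ⟨ha, hb, hc⟩ := h'
      cases cs with
      | nil => simp at hl
      | cons c cs =>
        have hl' : cs.length = rs.length := by simpa using hl
        have h3' : ∀ c ∈ cs, c < 3 := fun x hx => h3 x (by simp [hx])
        have hc3 : c < 3 := h3 c (by simp)
        rw [wtL_cons] at hk ⊢
        simp only [lincomb]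
        interval_cases c
        · simpa using ih acc w (k + 1) ha cs hl' h3' (by simpa using hk)
        · have := ih _ _ _ hb cs hl' h3' (by simp at hk; omega)
          simp only [Function.iterate_one]
          simp
          omega
        · have := ih _ _ _ hc cs hl' h3' (by simp at hk; omega)
          simp only [Function.iterate_succ, Function.iterate_zero, Function.comp, id]
          simp
          omega

theorem genF_mem (rows : List (List ℕ)) (acc : List ℕ) (p : ℕ)
    (cs : List ℕ) (hl : cs.length = rows.length) (h3 : ∀ c ∈ cs, c < 3 ∧ c ≠ 0) :
    (p + twoL cs, lincomb cs rows acc) ∈ genF rows acc p := by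
  induction rows generalizing acc p cs with
  | nil =>
    have hcs : cs = [] := by simpa using hl
    subst hcs
    simp [genF, twoL, lincomb]
  | cons r rs ih =>
    cases cs with
    | nil => simp at hl
    | cons c cs =>
      have hl' : cs.length = rs.length := by simpa using hl
      have h3' : ∀ c ∈ cs, c < 3 ∧ c ≠ 0 := fun x hx => h3 x (by simp [hx])
      have hc3 := h3 c (by simp)
      simp only [genF, lincomb, List.mem_append, twoL_cons]
      obtain ⟨h1, h2⟩ := hc3
      have : c = 1 ∨ c = 2 := by omega
      rcases this with rfl | rfl
      · left
        simpa using ih (addL acc r) p cs hl' h3'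
      · right
        have := ih (addL (addL acc r) r) (p + 1) cs hl' h3'
        simpa [add_assoc] using this

theorem allR_sound {α : Type} (p : α → Bool) (l : List α) (h : allR p l = true) :
    ∀ a ∈ l, p a = true := by
  induction l with
  | nil => simp
  | cons b l ih =>
    have h' : cond (p b) (allR p l) false = true := h
    simp only [Bool.cond_false_right, Bool.and_eq_true] at h'
    intro a ha
    rcases List.mem_cons.1 ha with rfl | ha
    · exact h'.1
    · exact ih h'.2 a ha

theorem land_aux (a b A B : ℕ) (ha : a < 8) (hb : b < 8) (h1 : Nat.land a b = 0)
    (h2 : Nat.land A B = 0) : Nat.land (a + 8 * A) (b + 8 * B) = 0 := by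
  have h1' : a &&& b = 0 := h1
  have h2' : A &&& B = 0 := h2
  change (a + 8 * A) &&& (b + 8 * B) = 0
  apply Nat.eq_of_testBit_eq
  intro i
  have e1 : a + 8 * A = 2 ^ 3 * A + a := by ring
  have e2 : b + 8 * B = 2 ^ 3 * B + b := by ring
  rw [Nat.testBit_and, e1, e2, Nat.testBit_two_pow_mul_add _ ha, Nat.testBit_two_pow_mul_add _ hb]
  split_ifs with hi
  · rw [← Nat.testBit_and, h1']
  · rw [← Nat.testBit_and, h2']; simp

theorem enc_land (x y : List ℕ) (hx : ∀ v ∈ x, v < 3) (hy : ∀ v ∈ y, v < 3)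
    (hf : ∀ v ∈ addL x y, v ≠ 0) : Nat.land (enc x) (encN y) = 0 := by
  induction x generalizing y with
  | nil => exact Nat.zero_and _
  | cons a x ih =>
    cases y with
    | nil => exact Nat.and_zero _
    | cons b y =>
      rw [addL_cons] at hf
      have h1 := hx a (by simp)
      have h2 := hy b (by simp)
      have h3 := hf _ (List.mem_cons_self)
      have ih' := ih y (fun v hv => hx v (by simp [hv])) (fun v hv => hy v (by simp [hv]))
        (fun v hv => hf v (by simp [hv]))
      change Nat.land (2 ^ a + 8 * enc x) (2 ^ ((3 - b) % 3) + 8 * encN y) = 0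
      apply land_aux _ _ _ _ _ _ _ ih'
      all_goals interval_cases a <;> interval_cases b <;> first | decide | simp at h3

/-- The vector over `ZMod 3` represented by a list. -/
def toV (l : List ℕ) (j : Fin 18) : ZMod 3 := ((l.getD j 0 : ℕ) : ZMod 3)

/-- A list of residues of length 18. -/
def Good (l : List ℕ) : Prop := l.length = 18 ∧ ∀ v ∈ l, v < 3

theorem good_addL {a b : List ℕ} (ha : Good a) (hb : Good b) : Good (addL a b) := by
  rw [addL_eq]
  refine ⟨by simp [ha.1, hb.1], ?_⟩
  intro v hv
  rw [List.mem_iff_getElem] at hv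
  obtain ⟨i, hi, rfl⟩ := hv
  rw [List.getElem_zipWith]
  exact Nat.mod_lt _ (by norm_num)

theorem toV_addL {a b : List ℕ} (ha : Good a) (hb : Good b) (j : Fin 18) :
    toV (addL a b) j = toV a j + toV b j := by
  have h1 : (j : ℕ) < a.length := by rw [ha.1]; exact j.2
  have h2 : (j : ℕ) < b.length := by rw [hb.1]; exact j.2
  have h3 : (j : ℕ) < (List.zipWith (fun x y => (x + y) % 3) a b).length := by
    simp [h1, h2]
  unfold toV
  rw [addL_eq, List.getD_eq_getElem _ _ h3, List.getD_eq_getElem _ _ h1,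
    List.getD_eq_getElem _ _ h2, List.getElem_zipWith, ZMod.natCast_mod, Nat.cast_add]

theorem good_iter {a r : List ℕ} (ha : Good a) (hr : Good r) (c : ℕ) :
    Good ((fun a => addL a r)^[c] a) ∧
      ∀ j, toV ((fun a => addL a r)^[c] a) j = toV a j + (c : ZMod 3) * toV r j := by
  induction c with
  | zero => simp [ha]
  | succ c ih =>
    rw [Function.iterate_succ_apply']
    refine ⟨good_addL ih.1 hr, fun j => ?_⟩
    rw [toV_addL ih.1 hr, ih.2]
    push_cast
    ring

theorem lincomb_spec (n : ℕ) (f : Fin n → ℕ) (R : Fin n → List ℕ) (hR : ∀ i, Good (R i))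
    (acc : List ℕ) (ha : Good acc) :
    Good (lincomb (List.ofFn f) (List.ofFn R) acc) ∧
      ∀ j, toV (lincomb (List.ofFn f) (List.ofFn R) acc) j =
        toV acc j + ∑ i, (f i : ZMod 3) * toV (R i) j := by
  induction n generalizing acc with
  | zero => simp [lincomb, ha]
  | succ n ih =>
    rw [List.ofFn_succ, List.ofFn_succ]
    simp only [lincomb]
    have h := good_iter ha (hR 0) (f 0)
    have h' := ih (fun i => f i.succ) (fun i => R i.succ) (fun i => hR _) _ h.1
    refine ⟨h'.1, fun j => ?_⟩
    rw [h'.2, h.2, Fin.sum_univ_succ]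
    ring

theorem good_eq_ofFn {l : List ℕ} (h : Good l) : l = List.ofFn fun j : Fin 18 => (toV l j).val := by
  apply List.ext_getElem
  · simp [h.1]
  · intro i h1 h2
    rw [List.getElem_ofFn]
    unfold toV
    simp only
    rw [List.getD_eq_getElem _ _ h1, ZMod.val_natCast, Nat.mod_eq_of_lt]
    exact h.2 _ (List.getElem_mem _)

theorem wtL_ofFn (n : ℕ) (f : Fin n → ZMod 3) :
    wtL (List.ofFn fun i => (f i).val) = ∑ i, if f i = 0 then 0 else 1 := by
  unfold wtL
  rw [List.map_ofFn, List.sum_ofFn]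
  apply Finset.sum_congr rfl
  intro i _
  simp only [Function.comp, ZMod.val_eq_zero]

theorem twoL_ofFn (n : ℕ) (f : Fin n → ZMod 3) :
    twoL (List.ofFn fun i => (f i).val) = ∑ i, if f i = 2 then 1 else 0 := by
  unfold twoL
  rw [List.map_ofFn, List.sum_ofFn]
  apply Finset.sum_congr rfl
  intro i _
  simp only [Function.comp]
  have : ∀ x : ZMod 3, (x.val = 2) ↔ x = 2 := by decide
  simp only [this]

/-- Row `i` of `S`. -/
def RS (i : Fin 18) : List ℕ := rowsS.getD i []

/-- Row `i` of the transpose of `S`. -/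
def RT (i : Fin 18) : List ℕ := rowsT.getD i []

/-- The matrix `S` over `ZMod 3`. -/
def Smat (i j : Fin 18) : ZMod 3 := toV (RS i) j

theorem rowsS_eq : rowsS = List.ofFn RS := by decide +kernel
theorem rowsT_eq : rowsT = List.ofFn RT := by decide +kernel

theorem good_RS (i : Fin 18) : Good (RS i) := by
  have : ∀ i : Fin 18, (RS i).length = 18 ∧ ∀ v ∈ RS i, v < 3 := by decide +kernel
  exact this i

theorem good_RT (i : Fin 18) : Good (RT i) := by
  have : ∀ i : Fin 18, (RT i).length = 18 ∧ ∀ v ∈ RT i, v < 3 := by decide +kernel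
  exact this i

theorem good_zeroL : Good zeroL := by
  have : zeroL.length = 18 ∧ ∀ v ∈ zeroL, v < 3 := by decide +kernel
  exact this

theorem toV_zeroL (j : Fin 18) : toV zeroL j = 0 := by
  revert j; decide +kernel

theorem toV_RT (i j : Fin 18) : toV (RT j) i = Smat i j := by
  revert i j; decide +kernel

theorem S_orth (i j : Fin 18) : ∑ k, Smat i k * Smat j k = if i = j then -1 else 0 := by
  revert i j; decide +kernel

theorem S_orthT (i j : Fin 18) : ∑ k, Smat k i * Smat k j = if i = j then -1 else 0 := by
  revert i j; decide +kernel

/-- Weight of a vector. -/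
def wt {n : ℕ} (c : Fin n → ZMod 3) : ℕ := ∑ i, if c i = 0 then 0 else 1

/-- Number of entries `2`. -/
def twos {n : ℕ} (c : Fin n → ZMod 3) : ℕ := ∑ i, if c i = 2 then 1 else 0

theorem wt_eq_zero {n : ℕ} (c : Fin n → ZMod 3) (h : wt c = 0) : c = 0 := by
  funext i
  unfold wt at h
  rw [Finset.sum_eq_zero_iff] at h
  have := h i (Finset.mem_univ _)
  by_contra hc
  simp only [Pi.zero_apply] at hc
  simp [hc] at this

theorem wt_half (rows : List (List ℕ)) (R : Fin 18 → List ℕ) (hrows : rows = List.ofFn R)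
    (hR : ∀ i, Good (R i)) (k : ℕ) (hchk : chk rows zeroL 0 k = true)
    (u v : Fin 18 → ZMod 3) (hv : ∀ j, v j = ∑ i, u i * toV (R i) j) (hk : wt u ≤ k) :
    u = 0 ∨ 9 ≤ wt u + wt v := by
  have hs := lincomb_spec 18 (fun i => (u i).val) R hR zeroL good_zeroL
  have hlist := good_eq_ofFn hs.1
  have hv' : (fun j => toV (lincomb (List.ofFn fun i => (u i).val) (List.ofFn R) zeroL) j) = v := by
    funext j
    rw [hs.2, hv, toV_zeroL, zero_add]
    simp
  have := chk_sound rows zeroL 0 k hchk (List.ofFn fun i => (u i).val) (by rw [hrows]; simp)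
    (by
      intro c hc
      rw [List.mem_ofFn] at hc
      obtain ⟨i, rfl⟩ := hc
      exact ZMod.val_lt _) (by rw [wtL_ofFn]; exact hk)
  rw [hrows, hlist, wtL_ofFn, wtL_ofFn] at this
  have hv2 : ∀ j, toV (lincomb (List.ofFn fun i => (u i).val) (List.ofFn R) zeroL) j = v j :=
    fun j => congrFun hv' j
  simp only [hv2, zero_add] at this
  rcases this with h | h
  · left; exact wt_eq_zero u h
  · right; exact h

/-- The ternary self-dual code with generator matrix `[I | S]`. -/
def Code : Submodule (ZMod 3) (Fin (18 + 18) → ZMod 3) where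
  carrier := {c | ∀ j : Fin 18, c (Fin.natAdd 18 j) = ∑ i : Fin 18, c (Fin.castAdd 18 i) * Smat i j}
  add_mem' := by
    intro a b ha hb j
    simp only [Pi.add_apply, add_mul, Finset.sum_add_distrib]
    rw [ha j, hb j]
  zero_mem' := by intro j; simp
  smul_mem' := by
    intro r a ha j
    simp only [Pi.smul_apply, smul_eq_mul, mul_assoc]
    rw [← Finset.mul_sum, ha j]

theorem mem_Code {c : Fin (18 + 18) → ZMod 3} : c ∈ Code ↔
    ∀ j : Fin 18, c (Fin.natAdd 18 j) = ∑ i : Fin 18, c (Fin.castAdd 18 i) * Smat i j := Iff.rfl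

theorem Code_orth {c d : Fin (18 + 18) → ZMod 3} (hc : c ∈ Code) (hd : d ∈ Code) :
    ∑ i, c i * d i = 0 := by
  rw [Fin.sum_univ_add]
  have : ∑ j : Fin 18, c (Fin.natAdd 18 j) * d (Fin.natAdd 18 j) =
      ∑ i : Fin 18, ∑ k : Fin 18, c (Fin.castAdd 18 i) * d (Fin.castAdd 18 k) *
        ∑ j, Smat i j * Smat k j := by
    simp only [mem_Code.1 hc, mem_Code.1 hd, Finset.sum_mul_sum]
    simp only [Finset.mul_sum]
    rw [Finset.sum_comm]
    apply Finset.sum_congr rfl; intro i _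
    rw [Finset.sum_comm]
    apply Finset.sum_congr rfl; intro k _
    apply Finset.sum_congr rfl; intro j _
    ring
  rw [this]
  simp [S_orth]

/-- The codeword with given information part. -/
def cw (u : Fin 18 → ZMod 3) : Fin (18 + 18) → ZMod 3 :=
  Fin.append u (fun j => ∑ i, u i * Smat i j)

theorem cw_mem (u : Fin 18 → ZMod 3) : cw u ∈ Code := by
  intro j
  simp only [cw, Fin.append_left, Fin.append_right]

theorem Code_left {c : Fin (18 + 18) → ZMod 3}
    (h : ∀ i, c (Fin.castAdd 18 i) + ∑ j, Smat i j * c (Fin.natAdd 18 j) = 0) : c ∈ Code := by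
  intro j
  have h' : ∀ i, c (Fin.castAdd 18 i) = - ∑ j, Smat i j * c (Fin.natAdd 18 j) :=
    fun i => eq_neg_of_add_eq_zero_left (h i)
  simp only [h', neg_mul, Finset.sum_neg_distrib, Finset.sum_mul]
  rw [Finset.sum_comm]
  have : ∀ y : Fin 18, ∑ x, Smat x y * c (Fin.natAdd 18 y) * Smat x j =
      c (Fin.natAdd 18 y) * ∑ x, Smat x y * Smat x j := by
    intro y
    rw [Finset.mul_sum]
    apply Finset.sum_congr rfl; intro x _; ring
  simp only [this, S_orthT, mul_ite, mul_neg, mul_one, mul_zero, Finset.sum_ite_eq',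
    Finset.mem_univ, if_true, neg_neg]

theorem Code_right {c : Fin (18 + 18) → ZMod 3} (h : c ∈ Code) (i : Fin 18) :
    c (Fin.castAdd 18 i) = - ∑ j, Smat i j * c (Fin.natAdd 18 j) := by
  simp only [mem_Code.1 h, Finset.mul_sum]
  rw [Finset.sum_comm]
  have : ∀ y : Fin 18, ∑ x, Smat i x * (c (Fin.castAdd 18 y) * Smat y x) =
      c (Fin.castAdd 18 y) * ∑ x, Smat i x * Smat y x := by
    intro y
    rw [Finset.mul_sum]
    apply Finset.sum_congr rfl; intro x _; ring
  simp only [this, S_orth, mul_ite, mul_neg, mul_one, mul_zero, Finset.sum_ite_eq,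
    Finset.mem_univ, if_true, neg_neg]

theorem Code_dual {c : Fin (18 + 18) → ZMod 3} (h : ∀ d ∈ Code, ∑ i, c i * d i = 0) :
    c ∈ Code := by
  apply Code_left
  intro i
  have := h _ (cw_mem (Pi.single i 1))
  rw [Fin.sum_univ_add] at this
  simp only [cw, Fin.append_left, Fin.append_right] at this
  simp only [Pi.single_apply, mul_ite, mul_one, mul_zero, ite_mul, one_mul, zero_mul,
    Finset.sum_ite_eq', Finset.mem_univ, if_true] at this
  refine Eq.trans (congrArg₂ (fun a b => a + b) rfl ?_) this
  apply Finset.sum_congr rfl; intro j _; ring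

theorem wt_split (c : Fin (18 + 18) → ZMod 3) :
    wt c = wt (fun i : Fin 18 => c (Fin.castAdd 18 i)) +
      wt (fun i : Fin 18 => c (Fin.natAdd 18 i)) := by
  unfold wt
  exact Fin.sum_univ_add (fun i => if c i = 0 then 0 else 1)

theorem twos_split (c : Fin (18 + 18) → ZMod 3) :
    twos c = twos (fun i : Fin 18 => c (Fin.castAdd 18 i)) +
      twos (fun i : Fin 18 => c (Fin.natAdd 18 i)) := by
  unfold twos
  exact Fin.sum_univ_add (fun i => if c i = 2 then 1 else 0)

theorem wt_cast {n : ℕ} (c : Fin n → ZMod 3) : (wt c : ZMod 3) = ∑ i, c i * c i := by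
  unfold wt
  push_cast
  apply Finset.sum_congr rfl
  intro i _
  generalize c i = x
  revert x
  decide

theorem Code_wt_dvd {c : Fin (18 + 18) → ZMod 3} (h : c ∈ Code) : 3 ∣ wt c := by
  rw [← ZMod.natCast_eq_zero_iff, wt_cast]
  exact Code_orth h h

theorem Code_wt {c : Fin (18 + 18) → ZMod 3} (h : c ∈ Code) (h0 : c ≠ 0) : 9 ≤ wt c := by
  obtain ⟨m, hm⟩ := Code_wt_dvd h
  by_contra hlt
  have hs := wt_split c
  set u := fun i : Fin 18 => c (Fin.castAdd 18 i) with hu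
  set v := fun i : Fin 18 => c (Fin.natAdd 18 i) with hv
  have hne : ¬ (u = 0 ∧ v = 0) := by
    rintro ⟨h1, h2⟩
    apply h0
    funext i
    refine Fin.addCases (fun i => congrFun h1 i) (fun i => congrFun h2 i) i
  have hvu : ∀ j, v j = ∑ i, u i * toV (RS i) j := fun j => h j
  have huv : ∀ i, -u i = ∑ j, v j * toV (RT j) i := by
    intro i
    have := Code_right h i
    rw [hu]
    simp only
    rw [this, neg_neg]
    apply Finset.sum_congr rfl
    intro j _
    rw [toV_RT]; ring
  have hwn : wt (fun i => - u i) = wt u := by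
    unfold wt; simp
  have hcase : wt u ≤ 3 ∨ wt v ≤ 2 := by omega
  rcases hcase with hc | hc
  · rcases wt_half rowsS RS rowsS_eq good_RS 3 chkS_true u v hvu hc with h1 | h1
    · apply hne
      refine ⟨h1, ?_⟩
      funext j
      rw [hvu, h1]; simp
    · omega
  · rcases wt_half rowsT RT rowsT_eq good_RT 2 chkT_true v (fun i => - u i) huv hc with h1 | h1
    · apply hne
      refine ⟨?_, h1⟩
      funext i
      have := huv i
      rw [h1] at this
      simpa using this
    · omega

theorem take_eq : (rowsS.take 9).tail =
    List.ofFn (fun i : Fin 8 => RS (Fin.castAdd 9 i.succ : Fin (9 + 9))) := by decide +kernel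
theorem drop_eq : rowsS.drop 9 =
    List.ofFn (fun i : Fin 9 => RS (Fin.natAdd 9 i : Fin (9 + 9))) := by decide +kernel
theorem acc0_eq : rowsS.getD 0 [] = RS (Fin.castAdd 9 0 : Fin (9 + 9)) := by decide +kernel

theorem full_aux {c : Fin (18 + 18) → ZMod 3} (h : c ∈ Code) (hf : ∀ i, c i ≠ 0)
    (h0 : c (Fin.castAdd 18 (Fin.castAdd 9 0 : Fin (9 + 9))) = 1) : twos c % 2 = 1 := by
  rw [twos_split]
  have hv := mem_Code.1 h
  have hu0 : ∀ i : Fin 18, c (Fin.castAdd 18 i) ≠ 0 := fun i => hf _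
  have hv0 : ∀ i : Fin 18, c (Fin.natAdd 18 i) ≠ 0 := fun i => hf _
  generalize hug : (fun i : Fin 18 => c (Fin.castAdd 18 i)) = u at *
  generalize hvg : (fun i : Fin 18 => c (Fin.natAdd 18 i)) = v at *
  have hug' : ∀ i, c (Fin.castAdd 18 i) = u i := fun i => congrFun hug i
  have hvg' : ∀ i, c (Fin.natAdd 18 i) = v i := fun i => congrFun hvg i
  simp only [hug', hvg'] at hv hu0 hv0 h0
  have g0 : Good (addL zeroL (RS (Fin.castAdd 9 0 : Fin (9 + 9)))) :=
    good_addL good_zeroL (good_RS _)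
  have hx := lincomb_spec 8 (fun i : Fin 8 => (u (Fin.castAdd 9 i.succ : Fin (9 + 9))).val)
    (fun i : Fin 8 => RS (Fin.castAdd 9 i.succ : Fin (9 + 9))) (fun i => good_RS _) _ g0
  have hy := lincomb_spec 9 (fun i : Fin 9 => (u (Fin.natAdd 9 i : Fin (9 + 9))).val)
    (fun i : Fin 9 => RS (Fin.natAdd 9 i : Fin (9 + 9))) (fun i => good_RS _) _ good_zeroL
  have ex : ∀ {n : ℕ} (f : Fin n → Fin 18) (z : ℕ),
      z ∈ List.ofFn (fun i : Fin n => (u (f i)).val) → z < 3 ∧ z ≠ 0 := by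
    intro n f z hz
    rw [List.mem_ofFn] at hz
    obtain ⟨i, rfl⟩ := hz
    refine ⟨ZMod.val_lt _, ?_⟩
    rw [Ne, ZMod.val_eq_zero]
    exact hu0 _
  have mx := genF_mem ((rowsS.take 9).tail) (addL zeroL (rowsS.getD 0 [])) 0
    (List.ofFn fun i : Fin 8 => (u (Fin.castAdd 9 i.succ : Fin (9 + 9))).val)
    (by rw [take_eq]; simp) (ex _)
  have my := genF_mem (rowsS.drop 9) zeroL 0
    (List.ofFn fun i : Fin 9 => (u (Fin.natAdd 9 i : Fin (9 + 9))).val)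
    (by rw [drop_eq]; simp) (ex _)
  have ck := chkFull_true
  unfold chkFull at ck
  have c1 := allR_sound _ _ ck _ (List.mem_map_of_mem mx)
  have c2 := allR_sound _ _ c1 _ (List.mem_map_of_mem my)
  simp only at c2
  rw [take_eq, drop_eq, acc0_eq, twoL_ofFn, twoL_ofFn] at c2
  generalize lincomb (List.ofFn fun i : Fin 8 => (u (Fin.castAdd 9 i.succ : Fin (9 + 9))).val)
    (List.ofFn fun i : Fin 8 => RS (Fin.castAdd 9 i.succ : Fin (9 + 9)))
    (addL zeroL (RS (Fin.castAdd 9 0 : Fin (9 + 9)))) = x at *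
  generalize lincomb (List.ofFn fun i : Fin 9 => (u (Fin.natAdd 9 i : Fin (9 + 9))).val)
    (List.ofFn fun i : Fin 9 => RS (Fin.natAdd 9 i : Fin (9 + 9))) zeroL = y at *
  have hxy : ∀ j, toV (addL x y) j = v j := by
    intro j
    rw [toV_addL hx.1 hy.1, hx.2, hy.2, toV_addL good_zeroL (good_RS _), toV_zeroL, hv]
    rw [Fin.sum_univ_add (a := 9) (b := 9) (fun i : Fin (9 + 9) => u i * Smat i j),
      Fin.sum_univ_succ (n := 8) (fun i : Fin 9 => u (Fin.castAdd 9 i : Fin (9 + 9)) *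
        Smat (Fin.castAdd 9 i : Fin (9 + 9)) j), h0]
    simp only [ZMod.natCast_val, ZMod.cast_id', id, Smat]
    ring
  have gxy := good_addL hx.1 hy.1
  have hl := good_eq_ofFn gxy
  simp only [hxy] at hl
  have hfull : ∀ z ∈ addL x y, z ≠ 0 := by
    intro z hz
    rw [hl, List.mem_ofFn] at hz
    obtain ⟨i, rfl⟩ := hz
    rw [Ne, ZMod.val_eq_zero]
    exact hv0 _
  rw [enc_land x y hx.1.2 hy.1.2 hfull] at c2
  have c3 := Nat.eq_of_beq_eq_true c2
  rw [hl, twoL_ofFn] at c3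
  have hsu : twos u = (∑ i : Fin 8, if u (Fin.castAdd 9 i.succ : Fin (9 + 9)) = 2 then 1 else 0) +
      ∑ i : Fin 9, if u (Fin.natAdd 9 i : Fin (9 + 9)) = 2 then 1 else 0 := by
    unfold twos
    rw [Fin.sum_univ_add (a := 9) (b := 9) (fun i : Fin (9 + 9) => if u i = 2 then 1 else 0),
      Fin.sum_univ_succ (n := 8) (fun i : Fin 9 => if u (Fin.castAdd 9 i : Fin (9 + 9)) = 2
        then 1 else 0), h0]
    have : (1 : ZMod 3) ≠ 2 := by decide
    rw [if_neg this, zero_add]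
  have hsv : twos v = ∑ i, if v i = 2 then 1 else 0 := rfl
  rw [hsu, hsv]
  simp only [zero_add] at c3
  exact c3

theorem full_odd {c : Fin (18 + 18) → ZMod 3} (h : c ∈ Code) (hf : ∀ i, c i ≠ 0) :
    twos c % 2 = 1 := by
  have key : ∀ x : ZMod 3, x ≠ 0 → x = 1 ∨ -x = 1 := by decide
  rcases key _ (hf (Fin.castAdd 18 (Fin.castAdd 9 0 : Fin (9 + 9)))) with h0 | h0
  · exact full_aux h hf h0
  · have := full_aux (c := -c) (Code.neg_mem h) (fun i => by simpa using hf i) h0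
    have hs : twos c + twos (-c) = 36 := by
      unfold twos
      rw [← Finset.sum_add_distrib]
      have : ∀ i ∈ (Finset.univ : Finset (Fin (18 + 18))),
          ((if c i = 2 then 1 else 0) + (if (-c) i = 2 then 1 else 0) : ℕ) = 1 := by
        intro i _
        have k2 : ∀ x : ZMod 3, x ≠ 0 →
          ((if x = 2 then 1 else 0) + (if -x = 2 then 1 else 0) : ℕ) = 1 := by decide
        exact k2 _ (hf i)
      rw [Finset.sum_congr rfl this]
      simp
    omega

/-- The information-set isomorphism. -/
def codeEquiv : Code ≃ₗ[ZMod 3] (Fin 18 → ZMod 3) where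
  toFun c := fun i => c.1 (Fin.castAdd 18 i)
  map_add' _ _ := rfl
  map_smul' _ _ := rfl
  invFun u := ⟨cw u, cw_mem u⟩
  left_inv := by
    intro c
    apply Subtype.ext
    funext i
    refine Fin.addCases (fun i => ?_) (fun i => ?_) i
    · simp only [cw, Fin.append_left]
    · simp only [cw, Fin.append_right]
      exact (c.2 i).symm
  right_inv := by
    intro u
    funext i
    simp only [cw, Fin.append_left]

instance fact_three : Fact (Nat.Prime 3) := ⟨Nat.prime_three⟩

theorem finrank_Code : Module.finrank (ZMod 3) Code = 18 := by
  rw [codeEquiv.finrank_eq]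
  simp

/-- Restriction of codewords to a set of coordinates. -/
def restr (T : Finset (Fin (18 + 18))) : Code →ₗ[ZMod 3] (T → ZMod 3) where
  toFun c := fun i => c.1 i.1
  map_add' _ _ := rfl
  map_smul' _ _ := rfl

theorem restr_surj (T : Finset (Fin (18 + 18))) (hT : T.card ≤ 8) :
    LinearMap.range (restr T) = ⊤ := by
  classical
  by_contra hne
  obtain ⟨f, hf0, hf⟩ := Submodule.exists_le_ker_of_lt_top _ (lt_top_iff_ne_top.2 hne)
  have hfx : ∀ x : T → ZMod 3, f x = ∑ i, x i * f (Pi.single i 1) := by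
    intro x
    conv_lhs => rw [pi_eq_sum_univ' x]
    rw [map_sum]
    apply Finset.sum_congr rfl
    intro i _
    rw [map_smul, smul_eq_mul]
  let d : Fin (18 + 18) → ZMod 3 := fun i => if h : i ∈ T then f (Pi.single ⟨i, h⟩ 1) else 0
  have hd : d ∈ Code := by
    apply Code_dual
    intro c hc
    have h1 : f (restr T ⟨c, hc⟩) = 0 := hf (LinearMap.mem_range_self _ _)
    rw [hfx] at h1
    rw [← h1]
    rw [← Finset.sum_subset (Finset.subset_univ T)]
    · rw [← Finset.sum_coe_sort T]
      apply Finset.sum_congr rfl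
      intro i _
      simp only [d, i.2, dif_pos]
      rw [mul_comm]
      rfl
    · intro i _ hi
      simp [d, hi]
  have hd0 : d = 0 := by
    by_contra hd0
    have h9 := Code_wt hd hd0
    have : wt d ≤ T.card := by
      unfold wt
      rw [Finset.card_eq_sum_ones, ← Finset.sum_subset (Finset.subset_univ T)]
      · apply Finset.sum_le_sum
        intro i _
        split_ifs <;> omega
      · intro i _ hi
        simp [d, hi]
    omega
  apply hf0
  ext i
  have := congrFun hd0 i.1
  simp only [d, i.2, dif_pos] at this
  simpa using this

open Classical in
/-- The codewords as a finset. -/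
def CF : Finset (Fin (18 + 18) → ZMod 3) := Finset.univ.filter (· ∈ Code)

theorem mem_CF {c : Fin (18 + 18) → ZMod 3} : c ∈ CF ↔ c ∈ Code := by
  simp [CF]

attribute [irreducible] CF

/-- The set of zero coordinates. -/
def zs (c : Fin (18 + 18) → ZMod 3) : Finset (Fin (18 + 18)) := Finset.univ.filter (c · = 0)

theorem zs_card (c : Fin (18 + 18) → ZMod 3) : (zs c).card + wt c = 36 := by
  unfold zs wt
  rw [Finset.card_filter, ← Finset.sum_add_distrib]
  have : ∀ i ∈ (Finset.univ : Finset (Fin (18 + 18))),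
      ((if c i = 0 then 1 else 0) + (if c i = 0 then 0 else 1) : ℕ) = 1 := by
    intro i _; split_ifs <;> rfl
  rw [Finset.sum_congr rfl this]
  simp

theorem card_vanish (T : Finset (Fin (18 + 18))) (hT : T.card ≤ 8) :
    (CF.filter (fun c => T ⊆ zs c)).card = 3 ^ (18 - T.card) := by
  classical
  have h1 := LinearMap.finrank_range_add_finrank_ker (restr T)
  rw [restr_surj T hT, finrank_Code, finrank_top, Module.finrank_fintype_fun_eq_card,
    Fintype.card_coe] at h1
  have h2 : Nat.card (LinearMap.ker (restr T)) = 3 ^ (18 - T.card) := by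
    rw [Module.natCard_eq_pow_finrank (K := ZMod 3), Nat.card_zmod]
    congr 1
    omega
  rw [← h2, ← Nat.card_eq_finsetCard]
  refine Nat.card_congr
    { toFun := fun c => ⟨⟨c.1, mem_CF.1 (Finset.mem_filter.1 c.2).1⟩, ?_⟩
      invFun := fun c => ⟨c.1.1, Finset.mem_filter.2 ⟨mem_CF.2 c.1.2, ?_⟩⟩
      left_inv := fun c => rfl
      right_inv := fun c => rfl }
  · rw [LinearMap.mem_ker]
    funext i
    have := (Finset.mem_filter.1 c.2).2 i.2
    exact (Finset.mem_filter.1 this).2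
  · intro i hi
    have := congrFun (LinearMap.mem_ker.1 c.2) ⟨i, hi⟩
    exact Finset.mem_filter.2 ⟨Finset.mem_univ _, this⟩

theorem moment (t : ℕ) (ht : t ≤ 8) :
    ∑ c ∈ CF, ((zs c).card.choose t) = Nat.choose 36 t * 3 ^ (18 - t) := by
  classical
  have h1 : ∀ c ∈ CF, (zs c).card.choose t =
      ∑ T ∈ Finset.powersetCard t (Finset.univ : Finset (Fin (18 + 18))),
        if T ⊆ zs c then 1 else 0 := by
    intro c _
    rw [← Finset.card_powersetCard, ← Finset.card_filter]
    congr 1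
    ext T
    simp only [Finset.mem_powersetCard, Finset.mem_filter, Finset.subset_univ, true_and]
    tauto
  rw [Finset.sum_congr rfl h1, Finset.sum_comm]
  have h2 : ∀ T ∈ Finset.powersetCard t (Finset.univ : Finset (Fin (18 + 18))),
      (∑ c ∈ CF, if T ⊆ zs c then 1 else 0) = 3 ^ (18 - t) := by
    intro T hT
    have hc := (Finset.mem_powersetCard.1 hT).2
    rw [← Finset.card_filter, card_vanish T (by omega), hc]
  rw [Finset.sum_congr rfl h2, Finset.sum_const, Finset.card_powersetCard]
  simp

/-- Newton coefficients of `z (z - 3) ⋯ (z - 21)`. -/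
def lam (t : ℕ) : ℤ :=
  [0, -4188800, 6164480, -5927040, 4314240, -2419200, 1008000, -282240, 40320].getD t 0

theorem newton (m : Fin 13) : (264539520 : ℤ) * ((m : ℕ).choose 8 : ℕ) =
    ∑ t ∈ Finset.range 9, lam t * ((3 * (m : ℕ)).choose t : ℕ) := by
  revert m; decide +kernel

theorem moment_total : ∑ t ∈ Finset.range 9, lam t * ((Nat.choose 36 t * 3 ^ (18 - t) : ℕ) : ℤ) =
    264539520 * 43335 := by decide +kernel

theorem sum_choose : ∑ c ∈ CF, ((zs c).card / 3).choose 8 = 43335 := by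
  have h : (264539520 : ℤ) * ((∑ c ∈ CF, ((zs c).card / 3).choose 8 : ℕ) : ℤ) =
      264539520 * 43335 := by
    rw [← moment_total, Nat.cast_sum, Finset.mul_sum]
    have h1 : ∀ t ∈ Finset.range 9, lam t * ((Nat.choose 36 t * 3 ^ (18 - t) : ℕ) : ℤ) =
        ∑ c ∈ CF, lam t * ((zs c).card.choose t : ℕ) := by
      intro t ht
      have := Finset.mem_range.1 ht
      rw [← moment t (by omega), Nat.cast_sum, Finset.mul_sum]
    rw [Finset.sum_congr rfl h1, Finset.sum_comm]
    apply Finset.sum_congr rfl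
    intro c hc
    obtain ⟨m, hm⟩ := Code_wt_dvd (mem_CF.1 hc)
    have hz := zs_card c
    have hz3 : (zs c).card = 3 * ((zs c).card / 3) := by omega
    have := newton ⟨(zs c).card / 3, by omega⟩
    simp only at this
    rw [← hz3] at this
    exact this
  have h2 := mul_left_cancel₀ (by norm_num) h
  exact_mod_cast h2

/-- The code, with index type `Fin 36`. -/
def C36 (c : Fin 36 → ZMod 3) : Prop := c ∈ Code

theorem C_orth {c d : Fin 36 → ZMod 3} (hc : C36 c) (hd : C36 d) : ∑ i, c i * d i = 0 :=
  Code_orth hc hd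

theorem C_dual {c : Fin 36 → ZMod 3} (h : ∀ d, C36 d → ∑ i, c i * d i = 0) : C36 c :=
  Code_dual h

theorem C_wt {c : Fin 36 → ZMod 3} (h : C36 c) (h0 : c ≠ 0) : 9 ≤ wt c := Code_wt h h0

theorem C_dvd {c : Fin 36 → ZMod 3} (h : C36 c) : 3 ∣ wt c := Code_wt_dvd h

theorem C_full {c : Fin 36 → ZMod 3} (h : C36 c) (hf : ∀ i, c i ≠ 0) : twos c % 2 = 1 :=
  full_odd h hf

theorem C_zero : C36 0 := Code.zero_mem

theorem C_neg {c : Fin 36 → ZMod 3} (h : C36 c) : C36 (-c) := Code.neg_mem h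

theorem C_sum_aux : ∑ c ∈ CF, ((36 - wt c) / 3).choose 8 = 43335 := by
  rw [← sum_choose]
  apply Finset.sum_congr rfl
  intro c _
  have h : 36 - wt c = (zs c).card := by
    have := zs_card c
    omega
  rw [h]

theorem C_sum : ∃ F : Finset (Fin 36 → ZMod 3), (∀ c, c ∈ F ↔ C36 c) ∧
    ∑ c ∈ F, ((36 - wt c) / 3).choose 8 = 43335 := by
  exact ⟨CF, fun c => mem_CF, C_sum_aux⟩

attribute [irreducible] C36

/-- Reduction modulo 3. -/
def red (y : Fin 36 → ℤ) : Fin 36 → ZMod 3 := fun i => (y i : ZMod 3)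

/-- Integer lift. -/
def lft (c : ZMod 3) : ℤ := if c = 0 then 0 else if c = 1 then 1 else -1

theorem lft_cast (c : ZMod 3) : (lft c : ZMod 3) = c := by revert c; decide
theorem lft_sq (c : ZMod 3) : lft c ^ 2 = if c = 0 then 0 else 1 := by revert c; decide
theorem lft_cases (c : ZMod 3) : (lft c = 0 ∧ c = 0) ∨ (lft c = 1 ∧ c = 1) ∨
    (lft c = -1 ∧ c = 2) := by
  revert c; decide

theorem cast_eq_lft (a : ℤ) (c : ZMod 3) (h : (a : ZMod 3) = c) : ∃ k, a = lft c + 3 * k := by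
  have h2 : ((lft c : ℤ) : ZMod 3) = (a : ZMod 3) := by rw [lft_cast, h]
  rw [ZMod.intCast_eq_intCast_iff_dvd_sub] at h2
  obtain ⟨k, hk⟩ := h2
  exact ⟨k, by push_cast at hk; linarith⟩

theorem wt_int (c : Fin 36 → ZMod 3) : (wt c : ℤ) = ∑ i, lft (c i) ^ 2 := by
  unfold wt
  push_cast
  exact Finset.sum_congr rfl fun i _ => by rw [lft_sq]

/-- Coordinate-wise excess. -/
theorem coord (a : ℤ) (c : ZMod 3) (h : (a : ZMod 3) = c) :
    a = lft c ∨ (a ^ 2 - lft c ^ 2 = 3 ∧ c ≠ 0 ∧ a = -2 * lft c) ∨ 9 ≤ a ^ 2 - lft c ^ 2 := by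
  obtain ⟨k, hk⟩ := cast_eq_lft a c h
  have hk' : k = 0 ∨ k = 1 ∨ k = -1 ∨ 2 ≤ k ∨ k ≤ -2 := by omega
  rcases lft_cases c with ⟨h1, h2⟩ | ⟨h1, h2⟩ | ⟨h1, h2⟩ <;> rw [h1] at hk ⊢ <;>
  rcases hk' with rfl | rfl | rfl | h3 | h3
  all_goals first
    | (left; omega)
    | (right; right; subst hk; norm_num; done)
    | (right; right; subst hk; nlinarith)
    | (right; left; subst hk; subst h2; exact ⟨by norm_num, by decide, by norm_num⟩)

theorem sum_sq_ge (a : Fin 36 → ℤ) : (wt (red a) : ℤ) ≤ ∑ i, a i ^ 2 := by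
  rw [wt_int]
  apply Finset.sum_le_sum
  intro i _
  rcases coord (a i) (red a i) rfl with h | h | h
  · rw [← h]
  · linarith [h.1]
  · linarith

theorem sum_sq_mod3 {a : Fin 36 → ℤ} (h : C36 (red a)) : 3 ∣ ∑ i, a i ^ 2 := by
  have := C_orth h h
  have h2 : ((∑ i, a i ^ 2 : ℤ) : ZMod 3) = 0 := by
    rw [← this]; push_cast
    exact Finset.sum_congr rfl fun i _ => by rw [sq]; rfl
  exact (ZMod.intCast_zmod_eq_zero_iff_dvd _ 3).1 h2

theorem red_zero_dvd {a : Fin 36 → ℤ} (h : red a = 0) (i : Fin 36) : ∃ k, a i = 3 * k :=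
  (ZMod.intCast_zmod_eq_zero_iff_dvd (a i) 3).1 (congrFun h i)

theorem sum_sq_nine {a : Fin 36 → ℤ} (h : C36 (red a)) (h0 : a ≠ 0) : 9 ≤ ∑ i, a i ^ 2 := by
  by_cases hr : red a = 0
  · obtain ⟨i, hi⟩ := Function.ne_iff.1 h0
    have h1 : a i ^ 2 ≤ ∑ i, a i ^ 2 :=
      Finset.single_le_sum (f := fun i => a i ^ 2) (fun j _ => sq_nonneg _) (Finset.mem_univ i)
    obtain ⟨k, hk⟩ := red_zero_dvd hr i
    have hk0 : k ≠ 0 := by rintro rfl; exact hi (by simp [hk])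
    have : 1 ≤ k ^ 2 := by have := sq_pos_of_ne_zero hk0 (a := k); linarith
    rw [hk] at h1
    linarith
  · have := C_wt h hr
    have h2 := sum_sq_ge a
    have : (9 : ℤ) ≤ wt (red a) := by exact_mod_cast this
    linarith

/-- Weak membership. -/
def PL (y : Fin 36 → ℤ) : Prop := C36 (red y) ∧ ((∀ i, 2 ∣ y i) ∨ (∀ i, ¬ 2 ∣ y i))

/-- The scaled lattice. -/
def Lam (y : Fin 36 → ℤ) : Prop := PL y ∧ 4 ∣ ∑ i, y i

theorem red_half {a : Fin 36 → ℤ} (h : C36 (red fun i => 2 * a i)) : C36 (red a) := by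
  have : red a = - red (fun i => 2 * a i) := by
    funext i
    simp only [red, Pi.neg_apply]; push_cast
    generalize (a i : ZMod 3) = t
    revert t; decide
  rw [this]; exact C_neg h

theorem red_double {a : Fin 36 → ℤ} (h : C36 (red a)) : C36 (red fun i => 2 * a i) := by
  have : red (fun i => 2 * a i) = - red a := by
    funext i
    simp only [red, Pi.neg_apply]; push_cast
    generalize (a i : ZMod 3) = t
    revert t; decide
  rw [this]; exact C_neg h

theorem even_form {y : Fin 36 → ℤ} (h : ∀ i, 2 ∣ y i) : ∃ a : Fin 36 → ℤ, y = fun i => 2 * a i := by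
  choose a ha using h
  exact ⟨a, funext ha⟩

theorem odd_sq_sum {y : Fin 36 → ℤ} (h : ∀ i, ¬ 2 ∣ y i) :
    8 ∣ (∑ i, y i ^ 2) - 36 := by
  have : (∑ i, y i ^ 2) - 36 = ∑ i, (y i ^ 2 - 1) := by
    rw [Finset.sum_sub_distrib]; simp
  rw [this]
  apply Finset.dvd_sum
  intro i _
  have := h i
  exact Int.eight_dvd_sq_sub_one_of_odd (by rw [← Int.not_even_iff_odd, even_iff_two_dvd]; exact this)

theorem odd_sq_ge {y : Fin 36 → ℤ} (h : ∀ i, ¬ 2 ∣ y i) : 36 ≤ ∑ i, y i ^ 2 := by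
  have h1 : ∑ i : Fin 36, (1 : ℤ) ≤ ∑ i, y i ^ 2 := by
    apply Finset.sum_le_sum
    intro i _
    have hk0 : y i ≠ 0 := fun h0 => h i (by simp [h0])
    have := sq_pos_of_ne_zero hk0 (a := y i); linarith
  simpa using h1

theorem sq_double (a : Fin 36 → ℤ) : ∑ i, (2 * a i) ^ 2 = 4 * ∑ i, a i ^ 2 := by
  rw [Finset.mul_sum]; exact Finset.sum_congr rfl fun i _ => by ring

theorem PL_min {y : Fin 36 → ℤ} (h : PL y) (h0 : y ≠ 0) : 36 ≤ ∑ i, y i ^ 2 := by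
  obtain ⟨hc, he | ho⟩ := h
  · obtain ⟨a, rfl⟩ := even_form he
    have ha : a ≠ 0 := by rintro rfl; exact h0 (by funext i; simp)
    have := sum_sq_nine (red_half hc) ha
    rw [sq_double]; linarith
  · exact odd_sq_ge ho

theorem sum_sq_par (a : Fin 36 → ℤ) : 2 ∣ (∑ i, a i ^ 2) - ∑ i, a i := by
  rw [← Finset.sum_sub_distrib]
  apply Finset.dvd_sum
  intro i _
  have := Int.even_mul_pred_self (a i)
  rw [even_iff_two_dvd] at this
  convert this using 1; ring

theorem even_six {a : Fin 36 → ℤ} (h : Lam fun i => 2 * a i) : 6 ∣ ∑ i, a i ^ 2 := by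
  have h1 := sum_sq_mod3 (red_half h.1.1)
  have h2 := h.2
  rw [← Finset.mul_sum] at h2
  have h3 := sum_sq_par a
  omega

theorem Lam_even {y : Fin 36 → ℤ} (h : Lam y) (he : ∀ i, 2 ∣ y i) : 24 ∣ ∑ i, y i ^ 2 := by
  obtain ⟨a, rfl⟩ := even_form he
  have := even_six h
  rw [sq_double]; omega

theorem Lam_odd_min {y : Fin 36 → ℤ} (h : Lam y) (ho : ∀ i, ¬ 2 ∣ y i) : 60 ≤ ∑ i, y i ^ 2 := by
  have h8 := odd_sq_sum ho
  have h3 := sum_sq_mod3 h.1.1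
  have h36 := odd_sq_ge ho
  by_contra hlt
  have heq : ∑ i, y i ^ 2 = 36 := by omega
  have hz : ∑ i, (y i ^ 2 - 1) = 0 := by rw [Finset.sum_sub_distrib, heq]; simp
  rw [Finset.sum_eq_zero_iff_of_nonneg] at hz
  · have h1 : ∀ i, y i = 1 ∨ y i = -1 := by
      intro i
      have := hz i (Finset.mem_univ i)
      exact (sq_eq_one_iff (a := y i)).1 (by linarith)
    have hf : ∀ i, red y i ≠ 0 := by
      intro i
      unfold red
      rcases h1 i with h | h <;> rw [h] <;> decide
    have ht := C_full h.1.1 hf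
    have hs : ∑ i, y i = 36 - 2 * (twos (red y) : ℤ) := by
      unfold twos
      push_cast
      rw [Finset.mul_sum]
      have : (36 : ℤ) = ∑ i : Fin 36, (1 : ℤ) := by simp
      rw [this, ← Finset.sum_sub_distrib]
      apply Finset.sum_congr rfl
      intro i _
      unfold red
      rcases h1 i with h | h <;> rw [h] <;> decide
    have := h.2
    omega
  · intro i _
    have hk0 : y i ≠ 0 := fun h0 => ho i (by simp [h0])
    have := sq_pos_of_ne_zero hk0 (a := y i); linarith

theorem Lam_min {y : Fin 36 → ℤ} (h : Lam y) (h0 : y ≠ 0) : 48 ≤ ∑ i, y i ^ 2 := by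
  rcases h.1.2 with he | ho
  · have h1 := PL_min h.1 h0
    have := Lam_even h he
    omega
  · linarith [Lam_odd_min h ho]

theorem pair_three {y z : Fin 36 → ℤ} (hy : C36 (red y)) (hz : C36 (red z)) :
    3 ∣ ∑ i, y i * z i := by
  have := C_orth hy hz
  have h2 : ((∑ i, y i * z i : ℤ) : ZMod 3) = 0 := by
    rw [← this]; push_cast
    exact Finset.sum_congr rfl fun i _ => rfl
  exact (ZMod.intCast_zmod_eq_zero_iff_dvd _ 3).1 h2

theorem pair_even_odd {y z : Fin 36 → ℤ} (hy : ∀ i, 2 ∣ y i) (hz : ∀ i, ¬ 2 ∣ z i) :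
    4 ∣ (∑ i, y i * z i) - ∑ i, y i := by
  rw [← Finset.sum_sub_distrib]
  apply Finset.dvd_sum
  intro i _
  obtain ⟨a, ha⟩ := hy i
  obtain ⟨b, hb⟩ : ∃ b, z i = 2 * b + 1 := ⟨z i / 2, by have := hz i; omega⟩
  rw [ha, hb]
  exact ⟨a * b, by ring⟩

theorem pair_even_even {y z : Fin 36 → ℤ} (hy : ∀ i, 2 ∣ y i) (hz : ∀ i, 2 ∣ z i) :
    4 ∣ ∑ i, y i * z i := by
  apply Finset.dvd_sum
  intro i _
  exact mul_dvd_mul (hy i) (hz i)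

theorem pair_odd_odd {y z : Fin 36 → ℤ} (hy : ∀ i, ¬ 2 ∣ y i) (hz : ∀ i, ¬ 2 ∣ z i) :
    4 ∣ (∑ i, y i * z i) - (∑ i, y i) - (∑ i, z i) + 36 := by
  have : (36 : ℤ) = ∑ i : Fin 36, (1 : ℤ) := by simp
  rw [this, ← Finset.sum_sub_distrib, ← Finset.sum_sub_distrib, ← Finset.sum_add_distrib]
  apply Finset.dvd_sum
  intro i _
  obtain ⟨a, ha⟩ : ∃ b, y i = 2 * b + 1 := ⟨y i / 2, by have := hy i; omega⟩
  obtain ⟨b, hb⟩ : ∃ b, z i = 2 * b + 1 := ⟨z i / 2, by have := hz i; omega⟩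
  rw [ha, hb]
  exact ⟨a * b, by ring⟩

theorem pairing {y z : Fin 36 → ℤ} (hy : Lam y) (hz : Lam z) : 12 ∣ ∑ i, y i * z i := by
  have h3 := pair_three hy.1.1 hz.1.1
  have h4 : 4 ∣ ∑ i, y i * z i := by
    have h1 := hy.2
    have h2 := hz.2
    rcases hy.1.2 with e | o <;> rcases hz.1.2 with e' | o'
    · exact pair_even_even e e'
    · have := pair_even_odd e o'; omega
    · have := pair_even_odd e' o
      have h : ∑ i, z i * y i = ∑ i, y i * z i := Finset.sum_congr rfl fun i _ => mul_comm _ _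
      rw [h] at this
      omega
    · have := pair_odd_odd o o'; omega
  omega

/-- The embedding `y ↦ y / (2 √3)`. -/
def emb (y : Fin 36 → ℤ) : EuclideanSpace ℝ (Fin 36) :=
  WithLp.toLp 2 fun i => (y i : ℝ) / (2 * √3)

/-- The lattice. -/
def YLat : Set (EuclideanSpace ℝ (Fin 36)) := {x | ∃ y, Lam y ∧ emb y = x}

theorem rt_pos : (0 : ℝ) < 2 * √3 := by positivity
theorem rt_sq : (2 * √3) * (2 * √3) = (12 : ℝ) := by
  have := Real.mul_self_sqrt (show (0 : ℝ) ≤ 3 by norm_num)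
  linarith

theorem inner_emb (x : EuclideanSpace ℝ (Fin 36)) (z : Fin 36 → ℤ) :
    12 * ⟪x, emb z⟫ = ∑ i, (2 * √3 * x i) * z i := by
  rw [PiLp.inner_apply, Finset.mul_sum]
  apply Finset.sum_congr rfl
  intro i _
  have h1 : ⟪x i, (emb z) i⟫ = (z i : ℝ) / (2 * √3) * x i := by
    simp [emb]
  rw [h1, ← rt_sq]
  field_simp

theorem emb_coord (y : Fin 36 → ℤ) (i : Fin 36) : 2 * √3 * emb y i = y i := by
  have : emb y i = (y i : ℝ) / (2 * √3) := rfl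
  rw [this]
  exact mul_div_cancel₀ _ rt_pos.ne'

theorem inner_emb_emb (y z : Fin 36 → ℤ) :
    12 * ⟪emb y, emb z⟫ = ((∑ i, y i * z i : ℤ) : ℝ) := by
  rw [inner_emb]
  push_cast
  exact Finset.sum_congr rfl fun i _ => by rw [emb_coord]

theorem norm_emb (y : Fin 36 → ℤ) : 12 * normOf (emb y) = ((∑ i, y i ^ 2 : ℤ) : ℝ) := by
  unfold normOf
  rw [inner_emb_emb]
  congr 1
  exact Finset.sum_congr rfl fun i _ => (sq _).symm

theorem emb_inj : Function.Injective emb := by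
  intro y z h
  funext i
  have h1 := emb_coord y i
  rw [h, emb_coord] at h1
  exact_mod_cast h1.symm

theorem eq_emb {x : EuclideanSpace ℝ (Fin 36)} {y : Fin 36 → ℤ} (h : ∀ i, 2 * √3 * x i = y i) :
    emb y = x := by
  ext i
  have := emb_coord y i
  rw [← h i] at this
  exact mul_left_cancel₀ rt_pos.ne' this

theorem emb_zero : emb 0 = 0 := by
  apply eq_emb; intro i; simp

theorem even_mem {z : Fin 36 → ℤ} (h : Lam z) (he : ∀ i, 2 ∣ z i) :
    emb z ∈ evenSublattice YLat := by
  refine ⟨⟨z, h, rfl⟩, ?_⟩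
  obtain ⟨m, hm⟩ := Lam_even h he
  refine ⟨m, ?_⟩
  have := norm_emb z
  rw [hm] at this
  push_cast at this
  linarith

theorem even_of_mem {z : Fin 36 → ℤ} (h : emb z ∈ evenSublattice YLat) :
    Lam z ∧ ∀ i, 2 ∣ z i := by
  obtain ⟨⟨y, hy, hyz⟩, m, hm⟩ := h
  obtain rfl := emb_inj hyz
  refine ⟨hy, ?_⟩
  rcases hy.1.2 with he | ho
  · exact he
  · exfalso
    have h1 := odd_sq_sum ho
    have h2 := norm_emb y
    rw [hm] at h2
    have h3 : 12 * (2 * m) = ∑ i, y i ^ 2 := by exact_mod_cast h2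
    omega

/-- Test vectors `12 e_i`, `6 (e_i - e_j)`, `4 c`. -/
theorem lam_single (i : Fin 36) : Lam (Pi.single i 12) := by
  refine ⟨⟨?_, Or.inl ?_⟩, ?_⟩
  · have : red (Pi.single i 12) = 0 := by
      funext j
      by_cases h : j = i
      · subst h; simp [red]; decide
      · simp [red, h]
    rw [this]; exact C_zero
  · intro j
    by_cases h : j = i
    · subst h; simp
    · simp [h]
  · rw [Finset.sum_pi_single']; simp

theorem even_single (i j : Fin 36) : (2 : ℤ) ∣ (Pi.single i 12 : Fin 36 → ℤ) j := by
  by_cases h : j = i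
  · subst h; simp
  · simp [h]

theorem even_diff (i j k : Fin 36) :
    (2 : ℤ) ∣ (Pi.single i 6 - Pi.single j 6 : Fin 36 → ℤ) k := by
  simp only [Pi.sub_apply, Pi.single_apply]
  split_ifs <;> norm_num

theorem lam_diff (i j : Fin 36) : Lam (Pi.single i 6 - Pi.single j 6) := by
  refine ⟨⟨?_, Or.inl (even_diff i j)⟩, ?_⟩
  · have : red (Pi.single i 6 - Pi.single j 6) = 0 := by
      funext k
      simp only [red, Pi.sub_apply, Pi.single_apply, Pi.zero_apply]
      split_ifs <;> decide
    rw [this]; exact C_zero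
  · simp only [Pi.sub_apply, Finset.sum_sub_distrib, Finset.sum_pi_single']
    simp

theorem lam_code {c : Fin 36 → ZMod 3} (h : C36 c) : Lam fun i => 4 * lft (c i) := by
  refine ⟨⟨?_, Or.inl fun i => ⟨2 * lft (c i), by ring⟩⟩, ?_⟩
  · have : red (fun i => 4 * lft (c i)) = c := by
      funext k
      simp only [red]; push_cast
      rw [lft_cast]
      generalize c k = t
      revert t; decide
    rw [this]; exact h
  · rw [← Finset.mul_sum]; exact dvd_mul_right _ _

theorem lam_three : Lam fun _ => 3 := by
  refine ⟨⟨?_, Or.inr fun i => by norm_num⟩, ?_⟩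
  · have : red (fun _ => 3) = 0 := by
      funext k
      simp only [red, Pi.zero_apply]; decide
    rw [this]; exact C_zero
  · simp

theorem dual_even {x : EuclideanSpace ℝ (Fin 36)} (hx : x ∈ dualSet (evenSublattice YLat)) :
    ∃ y, PL y ∧ emb y = x := by
  have key : ∀ z, Lam z → (∀ i, 2 ∣ z i) → ∃ m : ℤ, ∑ i, (2 * √3 * x i) * z i = 12 * m := by
    intro z hz he
    obtain ⟨m, hm⟩ := hx _ (even_mem hz he)
    exact ⟨m, by rw [← inner_emb, hm]⟩
  have hinteger : ∀ i, ∃ m : ℤ, 2 * √3 * x i = m := by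
    intro i
    obtain ⟨m, hm⟩ := key _ (lam_single i) (even_single i)
    refine ⟨m, ?_⟩
    have h2 : ∑ j, (2 * √3 * x j) * ((Pi.single i 12 : Fin 36 → ℤ) j : ℝ) =
        (2 * √3 * x i) * 12 := by
      rw [Finset.sum_eq_single i]
      · simp
      · intro j _ hj; simp [hj]
      · simp
    rw [h2] at hm
    linarith
  choose y hy using hinteger
  have key' : ∀ z, Lam z → (∀ i, 2 ∣ z i) → (12 : ℤ) ∣ ∑ i, y i * z i := by
    intro z hz he
    obtain ⟨m, hm⟩ := key z hz he
    refine ⟨m, ?_⟩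
    simp only [hy] at hm
    exact_mod_cast hm
  refine ⟨y, ⟨?_, ?_⟩, eq_emb hy⟩
  · apply C_dual
    intro d hd
    have h := key' _ (lam_code hd) fun i => ⟨2 * lft (d i), by ring⟩
    have h3 : (3 : ℤ) ∣ ∑ i, y i * (4 * lft (d i)) := by omega
    have h4 := (ZMod.intCast_zmod_eq_zero_iff_dvd _ 3).2 h3
    rw [← h4]
    push_cast
    apply Finset.sum_congr rfl
    intro i _
    rw [lft_cast]
    simp only [red]
    generalize (y i : ZMod 3) = s
    generalize d i = t
    revert s t; decide
  · have hpar : ∀ j, 2 ∣ y 0 - y j := by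
      intro j
      have h := key' _ (lam_diff 0 j) (even_diff 0 j)
      have h2 : ∑ i, y i * (Pi.single 0 6 - Pi.single j 6 : Fin 36 → ℤ) i = 6 * (y 0 - y j) := by
        simp only [Pi.sub_apply, mul_sub, Finset.sum_sub_distrib, Pi.single_apply, mul_ite,
          mul_zero, Finset.sum_ite_eq', Finset.sum_ite_eq, Finset.mem_univ, if_true]
        ring
      rw [h2] at h
      omega
    by_cases h0 : 2 ∣ y 0
    · left; intro j; have := hpar j; omega
    · right; intro j; have := hpar j; omega

theorem YLat_unimodular : IsUnimodularLattice YLat := by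
  apply Set.Subset.antisymm
  · rintro x ⟨y, hy, rfl⟩ w ⟨z, hz, rfl⟩
    obtain ⟨m, hm⟩ := pairing hy hz
    refine ⟨m, ?_⟩
    have := inner_emb_emb y z
    rw [hm] at this
    push_cast at this
    linarith
  · intro x hx
    obtain ⟨y, hy, rfl⟩ := dual_even (x := x) fun w hw => hx w hw.1
    refine ⟨y, ⟨hy, ?_⟩, rfl⟩
    obtain ⟨m, hm⟩ := hx _ ⟨_, lam_three, rfl⟩
    have := inner_emb_emb y fun _ => 3
    rw [hm, ← Finset.sum_mul] at this
    have h2 : 12 * m = (∑ i, y i) * 3 := by exact_mod_cast this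
    omega

theorem YLat_odd : IsOddLattice YLat := by
  refine ⟨_, ⟨_, lam_three, rfl⟩, 27, by decide, ?_⟩
  have := norm_emb fun _ => 3
  norm_num at this ⊢
  linarith

theorem YLat_sigma : HasSigma YLat 12 := by
  refine ⟨3, ⟨?_, ?_⟩, by norm_num⟩
  · refine ⟨emb (Pi.single 0 6), ⟨?_, ?_⟩, ?_⟩
    · rintro w hw
      obtain ⟨z, hz, rfl⟩ := hw.1
      obtain ⟨-, he⟩ := even_of_mem hw
      obtain ⟨m, hm⟩ := he 0
      refine ⟨m, ?_⟩
      have h := inner_emb_emb (Pi.single 0 6) z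
      have h2 : ∑ i, (Pi.single 0 6 : Fin 36 → ℤ) i * z i = 6 * z 0 := by
        simp only [Pi.single_apply, ite_mul, zero_mul, Finset.sum_ite_eq', Finset.sum_ite_eq,
          Finset.mem_univ, if_true]
      rw [h2, hm] at h
      push_cast at h
      linarith
    · rintro ⟨y, hy, hyz⟩
      obtain rfl := emb_inj hyz
      have := hy.2
      rw [Finset.sum_pi_single'] at this
      simp at this
    · have h := norm_emb (Pi.single 0 6)
      have h2 : ∑ i, (Pi.single 0 6 : Fin 36 → ℤ) i ^ 2 = 36 := by
        rw [Finset.sum_eq_single 0]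
        · simp
        · intro j _ hj; simp [hj]
        · simp
      rw [h2] at h
      push_cast at h
      linarith
  · rintro s ⟨x, ⟨hx, hn⟩, rfl⟩
    obtain ⟨y, hy, rfl⟩ := dual_even hx
    have h0 : y ≠ 0 := by
      rintro rfl
      exact hn ⟨0, ⟨hy, by simp⟩, rfl⟩
    have h1 := PL_min hy h0
    have h2 := norm_emb y
    have h3 : (36 : ℝ) ≤ ((∑ i, y i ^ 2 : ℤ) : ℝ) := by exact_mod_cast h1
    linarith

/-- Vectors over a codeword. -/
def Fib (c : Fin 36 → ZMod 3) : Finset (Fin 36 → ℤ) :=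
  if wt c = 12 then {fun i => lft (c i)} else
  if wt c = 9 then (Finset.univ.filter (c · ≠ 0)).image fun i =>
    Function.update (fun j => lft (c j)) i (-2 * lft (c i)) else ∅

theorem Fib_twelve {c : Fin 36 → ZMod 3} (h : wt c = 12) : Fib c = {fun i => lft (c i)} :=
  if_pos h

theorem Fib_nine {c : Fin 36 → ZMod 3} (h : wt c = 9) : Fib c =
    (Finset.univ.filter (c · ≠ 0)).image fun i =>
      Function.update (fun j => lft (c j)) i (-2 * lft (c i)) := by
  unfold Fib
  rw [if_neg (by omega), if_pos h]

theorem Fib_else {c : Fin 36 → ZMod 3} (h : wt c ≠ 12) (h' : wt c ≠ 9) : Fib c = ∅ := by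
  unfold Fib
  rw [if_neg h, if_neg h']

attribute [irreducible] Fib

theorem supp_card (c : Fin 36 → ZMod 3) : (Finset.univ.filter (c · ≠ 0)).card = wt c := by
  unfold wt
  rw [Finset.card_filter]
  exact Finset.sum_congr rfl fun i _ => by by_cases h : c i = 0 <;> simp [h]

theorem lft_ne {c : ZMod 3} (h : c ≠ 0) : lft c ≠ 0 := by revert h c; decide

theorem Fib_card {c : Fin 36 → ZMod 3} (h : C36 c) (h0 : c ≠ 0) :
    (Fib c).card = ((36 - wt c) / 3).choose 8 := by
  have h9 := C_wt h h0
  obtain ⟨m, hm⟩ := C_dvd h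
  by_cases h1 : wt c = 12
  · rw [Fib_twelve h1, h1]; simp
  by_cases h2 : wt c = 9
  · rw [Fib_nine h2, Finset.card_image_of_injOn, supp_card, h2]
    · decide
    · intro i hi j hj hij
      by_contra hne
      have hi' : c i ≠ 0 := by simpa using hi
      have h3 := congrFun hij i
      simp only [Function.update_self] at h3
      rw [Function.update_of_ne hne] at h3
      have := lft_ne hi'
      omega
  · rw [Fib_else h1 h2, Finset.card_empty, Nat.choose_eq_zero_of_lt]
    omega

theorem exc_nonneg {a : ℤ} {c : ZMod 3} (h : (a : ZMod 3) = c) : 0 ≤ a ^ 2 - lft c ^ 2 := by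
  rcases coord a c h with h | h | h
  · rw [h]; simp
  · linarith [h.1]
  · linarith

theorem Fib_fwd (c : Fin 36 → ZMod 3) (a : Fin 36 → ℤ) :
    a ∈ Fib c → red a = c ∧ ∑ i, a i ^ 2 = 12 := by
  intro ha
  by_cases h1 : wt c = 12
  · rw [Fib_twelve h1, Finset.mem_singleton] at ha
    subst ha
    refine ⟨funext fun i => lft_cast _, ?_⟩
    rw [← wt_int, h1]; norm_num
  by_cases h2 : wt c = 9
  · rw [Fib_nine h2, Finset.mem_image] at ha
    obtain ⟨i, hi, rfl⟩ := ha
    have hi' : c i ≠ 0 := by simpa using hi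
    constructor
    · funext j
      unfold red
      by_cases hj : j = i
      · subst hj
        rw [Function.update_self]
        push_cast
        rw [lft_cast]
        generalize c j = t
        revert t; decide
      · rw [Function.update_of_ne hj]
        exact lft_cast _
    · have hw := wt_int c
      rw [h2] at hw
      rw [← Finset.add_sum_erase _ _ (Finset.mem_univ i)] at hw ⊢
      rw [Function.update_self]
      have : ∑ x ∈ Finset.univ.erase i,
          Function.update (fun j => lft (c j)) i (-2 * lft (c i)) x ^ 2 =
          ∑ x ∈ Finset.univ.erase i, lft (c x) ^ 2 := by
        apply Finset.sum_congr rfl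
        intro j hj
        rw [Function.update_of_ne (Finset.ne_of_mem_erase hj)]
      rw [this]
      have h3 := lft_sq (c i)
      rw [if_neg hi'] at h3
      push_cast at hw
      linarith
  · rw [Fib_else h1 h2] at ha; simp at ha

theorem Fib_bwd {c : Fin 36 → ZMod 3} (h : C36 c) (h0 : c ≠ 0) (a : Fin 36 → ℤ) :
    (red a = c ∧ ∑ i, a i ^ 2 = 12) → a ∈ Fib c := by
  have h9 := C_wt h h0
  obtain ⟨m, hm⟩ := C_dvd h
  intro h12
  have hr := h12.1
  have hs := h12.2
  clear h12
  have hr' : ∀ i, (a i : ZMod 3) = c i := fun i => congrFun hr i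
  have hsum : ∑ i, (a i ^ 2 - lft (c i) ^ 2) = 12 - (wt c : ℤ) := by
    rw [Finset.sum_sub_distrib, hs, wt_int]
  have hnn : ∀ i ∈ Finset.univ, 0 ≤ a i ^ 2 - lft (c i) ^ 2 := fun i _ => exc_nonneg (hr' i)
  have hle : (wt c : ℤ) ≤ 12 := by
    have := Finset.sum_nonneg hnn
    linarith
  have hz : ∀ i, a i ^ 2 - lft (c i) ^ 2 = 0 → a i = lft (c i) := by
    intro i hi
    rcases coord (a i) (c i) (hr' i) with h | h | h
    · exact h
    · linarith [h.1]
    · linarith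
  have hcase : wt c = 12 ∨ wt c = 9 := by omega
  rcases hcase with h1 | h1
  · rw [Fib_twelve h1, Finset.mem_singleton]
    rw [h1] at hsum
    have : ∑ i, (a i ^ 2 - lft (c i) ^ 2) = 0 := by rw [hsum]; norm_num
    rw [Finset.sum_eq_zero_iff_of_nonneg hnn] at this
    exact funext fun i => hz i (this i (Finset.mem_univ i))
  · rw [Fib_nine h1, Finset.mem_image]
    rw [h1] at hsum
    have hsum3 : ∑ i, (a i ^ 2 - lft (c i) ^ 2) = 3 := by rw [hsum]; norm_num
    obtain ⟨i, -, hi⟩ := Finset.exists_ne_zero_of_sum_ne_zero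
      (show ∑ i, (a i ^ 2 - lft (c i) ^ 2) ≠ 0 by rw [hsum3]; norm_num)
    have hle3 : a i ^ 2 - lft (c i) ^ 2 ≤ 3 := by
      rw [← hsum3]
      exact Finset.single_le_sum (f := fun i => a i ^ 2 - lft (c i) ^ 2) hnn (Finset.mem_univ i)
    have hi3 : a i ^ 2 - lft (c i) ^ 2 = 3 ∧ c i ≠ 0 ∧ a i = -2 * lft (c i) := by
      rcases coord (a i) (c i) (hr' i) with h | h | h
      · rw [h] at hi; simp at hi
      · exact h
      · linarith
    rw [← Finset.add_sum_erase _ _ (Finset.mem_univ i), hi3.1] at hsum3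
    have hrest : ∑ j ∈ Finset.univ.erase i, (a j ^ 2 - lft (c j) ^ 2) = 0 := by linarith
    rw [Finset.sum_eq_zero_iff_of_nonneg fun j _ => hnn j (Finset.mem_univ j)] at hrest
    refine ⟨i, by simpa using hi3.2.1, ?_⟩
    funext j
    by_cases hj : j = i
    · subst hj; rw [Function.update_self]; exact hi3.2.2.symm
    · rw [Function.update_of_ne hj]
      exact (hz j (hrest j (Finset.mem_erase.2 ⟨hj, Finset.mem_univ j⟩))).symm

theorem mem_Fib {c : Fin 36 → ZMod 3} (h : C36 c) (h0 : c ≠ 0) (a : Fin 36 → ℤ) :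
    a ∈ Fib c ↔ red a = c ∧ ∑ i, a i ^ 2 = 12 :=
  ⟨Fib_fwd c a, Fib_bwd h h0 a⟩

theorem count_int : Set.ncard {a : Fin 36 → ℤ | C36 (red a) ∧ ∑ i, a i ^ 2 = 12} = 42840 := by
  obtain ⟨F, hF, hsum⟩ := C_sum
  have hset : {a : Fin 36 → ℤ | C36 (red a) ∧ ∑ i, a i ^ 2 = 12} =
      (((F.erase 0).biUnion Fib : Finset (Fin 36 → ℤ)) : Set (Fin 36 → ℤ)) := by
    ext a
    simp only [Set.mem_ofPred_eq, Finset.coe_biUnion, Set.mem_iUnion, Finset.mem_coe,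
      Finset.mem_erase]
    constructor
    · rintro ⟨hc, hs⟩
      have h0 : red a ≠ 0 := by
        intro h0
        have h9 : (9 : ℤ) ∣ ∑ i, a i ^ 2 := by
          apply Finset.dvd_sum
          intro i _
          obtain ⟨k, hk⟩ := red_zero_dvd h0 i
          exact ⟨k ^ 2, by rw [hk]; ring⟩
        rw [hs] at h9
        norm_num at h9
      have hm := (mem_Fib hc h0 a).2 (And.intro rfl hs)
      exact ⟨red a, ⟨h0, (hF _).2 hc⟩, hm⟩
    · rintro ⟨c, ⟨h0, hc⟩, ha⟩
      have hc' := (hF c).1 hc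
      have hm := (mem_Fib hc' h0 a).1 ha
      refine And.intro ?_ hm.2
      rw [hm.1]; exact hc'
  rw [hset, Set.ncard_coe_finset, Finset.card_biUnion]
  · have h1 : ∑ c ∈ F.erase 0, (Fib c).card = ∑ c ∈ F.erase 0, ((36 - wt c) / 3).choose 8 := by
      apply Finset.sum_congr rfl
      intro c hc
      rw [Finset.mem_erase] at hc
      exact Fib_card ((hF c).1 hc.2) hc.1
    rw [← Finset.add_sum_erase _ _ ((hF 0).2 C_zero)] at hsum
    have hw : wt (0 : Fin 36 → ZMod 3) = 0 := by simp [wt]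
    rw [hw] at hsum
    have h495 : ((36 - 0) / 3).choose 8 = 495 := by decide +kernel
    rw [h495] at hsum
    rw [h1]
    omega
  · intro c hc d hd hcd
    rw [Finset.mem_coe, Finset.mem_erase] at hc hd
    apply Finset.disjoint_left.2
    intro a ha hb
    have h1 := ((mem_Fib ((hF c).1 hc.2) hc.1 a).1 ha).1
    have h2 := ((mem_Fib ((hF d).1 hd.2) hd.1 a).1 hb).1
    exact hcd (h1.symm.trans h2)

theorem YLat_count : numVecsOfNorm YLat 4 = 42840 := by
  unfold numVecsOfNorm
  have hset : {x ∈ YLat | normOf x = 4} = (fun a : Fin 36 → ℤ => emb fun i => 2 * a i) ''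
      {a : Fin 36 → ℤ | C36 (red a) ∧ ∑ i, a i ^ 2 = 12} := by
    ext x
    constructor
    · rintro ⟨⟨y, hy, rfl⟩, hn⟩
      have h := norm_emb y
      rw [hn] at h
      have h48 : ∑ i, y i ^ 2 = 48 := by
        have : (((∑ i, y i ^ 2 : ℤ) : ℝ)) = ((48 : ℤ) : ℝ) := by rw [← h]; norm_num
        exact_mod_cast this
      rcases hy.1.2 with he | ho
      · obtain ⟨a, rfl⟩ := even_form he
        rw [sq_double] at h48
        exact ⟨a, ⟨red_half hy.1.1, by omega⟩, rfl⟩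
      · have := Lam_odd_min hy ho
        omega
    · rintro ⟨a, ⟨hc, hs⟩, rfl⟩
      refine ⟨⟨_, ⟨⟨red_double hc, Or.inl fun i => dvd_mul_right _ _⟩, ?_⟩, rfl⟩, ?_⟩
      · rw [← Finset.mul_sum]
        have := sum_sq_par a
        omega
      · have h := norm_emb fun i => 2 * a i
        rw [sq_double, hs] at h
        push_cast at h
        linarith
  rw [hset, Set.ncard_image_of_injective, count_int]
  intro a b hab
  have := emb_inj hab
  funext i
  have h := congrFun this i
  exact mul_left_cancel₀ two_ne_zero h

theorem YLat_min : HasMinNorm YLat 4 := by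
  constructor
  · have hne : {x ∈ YLat | normOf x = 4}.Nonempty := by
      apply Set.nonempty_of_ncard_ne_zero
      have := YLat_count
      unfold numVecsOfNorm at this
      rw [this]; norm_num
    obtain ⟨x, hx, hn⟩ := hne
    refine ⟨x, hx, ?_, hn⟩
    rintro rfl
    simp [normOf] at hn
  · rintro s ⟨x, ⟨y, hy, rfl⟩, hx0, rfl⟩
    have h0 : y ≠ 0 := by
      rintro rfl
      exact hx0 emb_zero
    have h1 := Lam_min hy h0
    have h2 := norm_emb y
    have h3 : (48 : ℝ) ≤ ((∑ i, y i ^ 2 : ℤ) : ℝ) := by exact_mod_cast h1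
    linarith

theorem exists_unimodular_dim36_min4_kissing42840_sigma12 :
    ∃ L : Set (EuclideanSpace ℝ (Fin 36)),
      IsUnimodularLattice L ∧ IsOddLattice L ∧ HasMinNorm L 4 ∧
        numVecsOfNorm L 4 = 42840 ∧ HasSigma L 12 := by
  exact ⟨YLat, YLat_unimodular, YLat_odd, YLat_min, YLat_count, YLat_sigma⟩
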